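/- Let p be a prime and let μ : ℚ_p^× → ℂ^× be a group homomorphism (a character of ℚ_p^×, not assumed continuous or unramified) whose value at p satisfies the Kim–Shahidi bound p^(−5/34) < ‖μ(p)‖ < p^(5/34), where ‖·‖ denotes the complex absolute value. Then for all integers n ≥ 1, j with 1 ≤ j ≤ 2n, and i ∈ ℤ, the function x ↦ μ(x)·|x|_p^(−n+j−1/2) on ℚ_p^× is not equal to the function x ↦ |x|_p^i. (This is the key local step in the proof that the Duke–Imamoglu–Ikeda lift is not a theta lift: none of the characters μ_v |·|^(−n+j−1/2) occurring in the Bernstein–Zelevinsky data of the local component of the lift is of the form |·|^i with i an integer.) -/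

import Mathlib

/-- **Key local step (unramified and ramified cases together).**
Let `p` be a prime and `μ : ℚ_p^× → ℂ^×` a character (group homomorphism, not assumed
continuous) whose value at `p` satisfies the Kim–Shahidi bound
`p^(−5/34) < ‖μ(p)‖ < p^(5/34)`.  Then for all integers `n ≥ 1`, `1 ≤ j ≤ 2n`, and
`i ∈ ℤ`, the function `x ↦ μ(x)·|x|_p^(−n+j−1/2)` on `ℚ_p^×` is not the function
`x ↦ |x|_p^i`.  Here `|·|_p = ‖·‖` is the `p`-adic absolute value with `|p|_p = p⁻¹`,
and real powers are `rpow` of the (positive) real `|x|_p`, regarded in `ℂ`. -/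
theorem dii_local_char_ne_intPower (p : ℕ) [Fact p.Prime]
    (μ : ℚ_[p]ˣ →* ℂˣ) (up : ℚ_[p]ˣ) (hup : (up : ℚ_[p]) = (p : ℚ_[p]))
    (hlow : (p : ℝ) ^ (-(5 : ℝ) / 34) < ‖(μ up : ℂ)‖)
    (hhigh : ‖(μ up : ℂ)‖ < (p : ℝ) ^ ((5 : ℝ) / 34))
    (n j : ℤ) (hn : 1 ≤ n) (hj1 : 1 ≤ j) (hj2 : j ≤ 2 * n) (i : ℤ) :
    (fun x : ℚ_[p]ˣ =>
        (μ x : ℂ) * ((‖(x : ℚ_[p])‖ ^ (-(n : ℝ) + (j : ℝ) - 1 / 2) : ℝ) : ℂ)) ≠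
      (fun x : ℚ_[p]ˣ => ((‖(x : ℚ_[p])‖ ^ ((i : ℤ) : ℝ) : ℝ) : ℂ)) := by
  intro h
  have h1 := congrArg norm (congrFun h up)
  have hp1 : (1 : ℝ) < (p : ℝ) := by exact_mod_cast (Fact.out : p.Prime).one_lt
  have hp0 : (0 : ℝ) < (p : ℝ) := by linarith
  have hn' : ‖(up : ℚ_[p])‖ = (p : ℝ)⁻¹ := by rw [hup]; exact Padic.norm_p
  have hpos : ∀ s : ℝ, 0 < (p : ℝ) ^ s := fun s => Real.rpow_pos_of_pos hp0 s
  have hinv : ∀ s : ℝ, ((p : ℝ)⁻¹) ^ s = (p : ℝ) ^ (-s) := fun s => by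
    rw [Real.rpow_neg hp0.le, Real.inv_rpow hp0.le]
  simp only [norm_mul, Complex.norm_real, hn', hinv, Real.norm_eq_abs, abs_of_pos (hpos _)] at h1
  have h2 : ‖(μ up : ℂ)‖ = (p : ℝ) ^ ((-(n : ℝ) + (j : ℝ) - 1 / 2) - (i : ℝ)) := by
    apply mul_right_cancel₀ (hpos (-(-(n : ℝ) + (j : ℝ) - 1 / 2))).ne'
    rw [h1, ← Real.rpow_add hp0]
    congr 1
    ring
  rw [h2] at hlow hhigh
  have h3 := (Real.rpow_lt_rpow_left_iff hp1).1 hlow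
  have h4 := (Real.rpow_lt_rpow_left_iff hp1).1 hhigh
  have h5 : (0 : ℝ) < ((j - n - i : ℤ) : ℝ) := by push_cast; linarith
  have h6 : ((j - n - i : ℤ) : ℝ) < ((1 : ℤ) : ℝ) := by push_cast; linarith
  have h7 : 0 < j - n - i := by exact_mod_cast h5
  have h8 : j - n - i < 1 := by exact_mod_cast h6
  omega
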